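/- (ε-closeness in the order-preserving sense) Let R_H = max_{σ,τ∈Ω} |H(σ) − H(τ)| and fix ε ∈ (0,1). If for every x ∈ V, q_x ≥ |h_x| + Σ_{y∈V}|J_{x,y}| + (1/β) log( 2|V|(|h_x| + Σ_{y∈V}|J_{x,y}|) / (ε R_H) ), then π^SCA_{β,q} is ε-close to the Gibbs distribution π^G_β in the order-preserving sense: for all σ, τ ∈ Ω, π^SCA_{β,q}(σ) ≥ π^SCA_{β,q}(τ) implies H(σ) ≤ H(τ) + ε R_H. -/

import Mathlib

open Real Finset

/-- Spin configurations: `Ω = {-1,+1}^V`. -/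
abbrev Conf (V : Type*) := V → ({-1, 1} : Finset ℝ)

instance {V : Type*} : Nonempty (Conf V) := ⟨fun _ => ⟨1, by simp⟩⟩

/-- Flip a single spin value. -/
noncomputable def spinFlip (s : ({-1, 1} : Finset ℝ)) : ({-1, 1} : Finset ℝ) :=
  ⟨-(s : ℝ), by
    have hs := s.2
    simp only [Finset.mem_insert, Finset.mem_singleton] at hs ⊢
    rcases hs with h | h <;> simp [h]⟩

/-- `σ^x`: the configuration `σ` with the spin at `x` flipped. -/
noncomputable def confFlip {V : Type*} [DecidableEq V] (σ : Conf V) (x : V) : Conf V :=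
  Function.update σ x (spinFlip (σ x))

/-- `D_{σ,τ}`: the set of vertices at which `σ` and `τ` disagree. -/
noncomputable def Dset {V : Type*} [Fintype V] (σ τ : Conf V) : Finset V :=
  Finset.univ.filter fun x => (σ x : ℝ) ≠ (τ x : ℝ)

/-- The cavity field `h̃_x(σ) = Σ_y J_{x,y} σ_y + h_x`. -/
noncomputable def cavity {V : Type*} [Fintype V] (J : V → V → ℝ) (h : V → ℝ)
    (σ : Conf V) (x : V) : ℝ :=
  (∑ y, J x y * (σ y : ℝ)) + h x

/-- The extended Hamiltonian `H̃(σ,τ)`. -/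
noncomputable def Htilde {V : Type*} [Fintype V] (J : V → V → ℝ) (h q : V → ℝ)
    (σ τ : Conf V) : ℝ :=
  -(1/2) * ∑ x, ∑ y, J x y * (σ x : ℝ) * (τ y : ℝ)
    - (1/2) * ∑ x, h x * ((σ x : ℝ) + (τ x : ℝ))
    - (1/2) * ∑ x, q x * (σ x : ℝ) * (τ x : ℝ)

/-- The Ising Hamiltonian `H(σ)`. -/
noncomputable def Hamil {V : Type*} [Fintype V] (J : V → V → ℝ) (h : V → ℝ)
    (σ : Conf V) : ℝ :=
  -(1/2) * ∑ x, ∑ y, J x y * (σ x : ℝ) * (σ y : ℝ) - ∑ x, h x * (σ x : ℝ)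

/-- The SCA weight `w(σ) = Σ_τ e^{-β H̃(σ,τ)}`. -/
noncomputable def wSCA {V : Type*} [Fintype V] [DecidableEq V] (J : V → V → ℝ)
    (h q : V → ℝ) (β : ℝ) (σ : Conf V) : ℝ :=
  ∑ τ : Conf V, Real.exp (-β * Htilde J h q σ τ)

/-- The SCA transition probability `P^SCA_{β,q}(σ,τ)`. -/
noncomputable def PSCA {V : Type*} [Fintype V] [DecidableEq V] (J : V → V → ℝ)
    (h q : V → ℝ) (β : ℝ) (σ τ : Conf V) : ℝ :=
  Real.exp (-β * Htilde J h q σ τ) / wSCA J h q β σ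

/-- The SCA equilibrium distribution `π^SCA_{β,q}`. -/
noncomputable def piSCA {V : Type*} [Fintype V] [DecidableEq V] (J : V → V → ℝ)
    (h q : V → ℝ) (β : ℝ) (σ : Conf V) : ℝ :=
  wSCA J h q β σ / ∑ τ : Conf V, wSCA J h q β τ

/-- Total-variation distance between two measures on `Ω`. -/
noncomputable def tvDist {V : Type*} [Fintype V] [DecidableEq V]
    (μ ν : Conf V → ℝ) : ℝ :=
  (1/2) * ∑ σ : Conf V, |μ σ - ν σ|

/-!
The field on each spin of `τ` in `H̃(σ,τ)` does not depend on the other spins of `τ`, so the sum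
over `τ` factorizes; comparing each factor with its `τ_x = σ_x` term gives
`w(σ) = e^{-β H̃(σ,σ)} ∏_x (1 + e^{-β (q_x + σ_x h̃_x(σ))})`, where `H̃(σ,σ) = H(σ) - ½ ∑_x q_x`.
Thus `w` orders configurations by `-β H` plus the logarithm of the product. As
`u ↦ log (1 + e^u)` has derivative at most `e^u` and `|h̃_x| ≤ K_x := |h_x| + ∑_y |J_{x,y}|`, that
logarithm oscillates by at most `β ∑_x 2 K_x e^{-β (q_x - K_x)}`, and the pinning condition says
that each summand is at most `ε R_H / |V|`.
-/

theorem spin_eq_neg_one_or_one (s : ({-1, 1} : Finset ℝ)) : (s : ℝ) = -1 ∨ (s : ℝ) = 1 := by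
  simpa only [Finset.mem_insert, Finset.mem_singleton] using s.2

theorem abs_spin (s : ({-1, 1} : Finset ℝ)) : |(s : ℝ)| = 1 := by
  rcases spin_eq_neg_one_or_one s with hs | hs <;> simp [hs]

theorem spin_mul_self (s : ({-1, 1} : Finset ℝ)) : (s : ℝ) * s = 1 := by
  rw [← abs_mul_abs_self, abs_spin, one_mul]

theorem sum_exp_spin_mul (a : ℝ) (s₀ : ({-1, 1} : Finset ℝ)) :
    ∑ s : ({-1, 1} : Finset ℝ), exp (s * a) = exp (s₀ * a) * (1 + exp (-(2 * (s₀ * a)))) := by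
  rw [Finset.sum_coe_sort {-1, 1} fun s => exp (s * a), Finset.sum_pair (by norm_num),
    mul_one_add, ← exp_add]
  rcases spin_eq_neg_one_or_one s₀ with hs | hs
  · rw [hs]
    ring_nf
  · rw [hs, add_comm]
    ring_nf

theorem sum_exp_sum_spin_mul {V : Type*} [Fintype V] [DecidableEq V] (a : V → ℝ) (σ : Conf V) :
    ∑ τ : Conf V, exp (∑ x, (τ x : ℝ) * a x)
      = exp (∑ x, (σ x : ℝ) * a x) * ∏ x, (1 + exp (-(2 * ((σ x : ℝ) * a x)))) := by
  simp only [exp_sum]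
  rw [← Finset.prod_mul_distrib, ← Fintype.prod_sum fun x (s : ({-1, 1} : Finset ℝ)) =>
    exp ((s : ℝ) * a x)]
  exact Finset.prod_congr rfl fun x _ => sum_exp_spin_mul (a x) (σ x)

theorem mul_exp_neg_le_of_log_div_le {a b t : ℝ} (ha : 0 ≤ a) (hb : 0 < b)
    (h : log (a / b) ≤ t) : a * exp (-t) ≤ b := by
  rw [exp_neg, ← div_eq_mul_inv, div_le_comm₀ (exp_pos t) hb]
  rcases ha.eq_or_lt with rfl | ha
  · rw [zero_div]
    exact (exp_pos t).le
  · exact (log_le_iff_le_exp (div_pos ha hb)).1 h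

theorem mul_two_mul_mul_exp_neg_le_of_pinning {β δ n K p : ℝ} (hβ : 0 < β) (hδ : 0 < δ)
    (hn : 0 ≤ n) (hK : 0 ≤ K) (hpin : K + 1 / β * log (2 * n * K / δ) ≤ p) :
    n * (2 * K * exp (-(β * (p - K)))) ≤ δ := by
  have hlog : log (2 * n * K / δ) ≤ β * (p - K) := by
    rw [← div_le_iff₀' hβ, ← one_div_mul_eq_div]
    linarith
  calc n * (2 * K * exp (-(β * (p - K)))) = 2 * n * K * exp (-(β * (p - K))) := by ring
    _ ≤ δ := mul_exp_neg_le_of_log_div_le (by positivity) hδ hlog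

theorem exp_sub_exp_le (u v : ℝ) : exp u - exp v ≤ exp u * (u - v) :=
  calc exp u - exp v = exp u * (1 - exp (v - u)) := by rw [mul_one_sub, ← exp_add, add_sub_cancel]
    _ ≤ exp u * (u - v) :=
      mul_le_mul_of_nonneg_left (by linarith [add_one_le_exp (v - u)]) (exp_pos u).le

theorem log_one_add_exp_sub_le (u v : ℝ) :
    log (1 + exp u) - log (1 + exp v) ≤ exp u * |u - v| := by
  have hlip : 0 ≤ exp u * |u - v| := by positivity
  rw [sub_le_iff_le_add', log_le_iff_le_exp (by positivity), exp_add, exp_log (by positivity)]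
  have hexp : exp u - exp v ≤ exp u * |u - v| :=
    (exp_sub_exp_le u v).trans <| mul_le_mul_of_nonneg_left (le_abs_self _) (exp_pos u).le
  calc 1 + exp u ≤ 1 + exp v + exp u * |u - v| := by linarith
    _ ≤ (1 + exp v) * (exp u * |u - v| + 1) := by
      linarith [mul_nonneg (exp_pos v).le hlip]
    _ ≤ (1 + exp v) * exp (exp u * |u - v|) := by
      gcongr
      exact add_one_le_exp _

theorem sum_le_of_forall_card_mul_le {ι : Type*} [Fintype ι] {f : ι → ℝ} {b : ℝ} (hb : 0 ≤ b)
    (hf : ∀ i, Fintype.card ι * f i ≤ b) : ∑ i, f i ≤ b := by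
  rcases isEmpty_or_nonempty ι with _ | _
  · simpa using hb
  · have hcard : (0 : ℝ) < Fintype.card ι := mod_cast Fintype.card_pos
    refine le_of_mul_le_mul_left ?_ hcard
    rw [Finset.mul_sum, ← nsmul_eq_mul]
    exact Finset.sum_le_card_nsmul _ _ _ fun i _ => hf i

section Weights

variable {V : Type*} [Fintype V] (J : V → V → ℝ) (h q : V → ℝ) (β : ℝ)

theorem abs_cavity_le (σ : Conf V) (x : V) : |cavity J h σ x| ≤ |h x| + ∑ y, |J x y| :=
  calc |cavity J h σ x| ≤ |∑ y, J x y * (σ y : ℝ)| + |h x| := abs_add_le _ _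
    _ ≤ (∑ y, |J x y * (σ y : ℝ)|) + |h x| := by
      gcongr
      exact Finset.abs_sum_le_sum_abs _ _
    _ = |h x| + ∑ y, |J x y| := by simp only [abs_mul, abs_spin, mul_one, add_comm]

theorem Htilde_self (σ : Conf V) : Htilde J h q σ σ = Hamil J h σ - 1 / 2 * ∑ x, q x := by
  simp only [Htilde, Hamil, mul_assoc, spin_mul_self, mul_one, mul_add, Finset.sum_add_distrib]
  ring

theorem Htilde_eq_sum_spin_mul (σ τ : Conf V) :
    Htilde J h q σ τ = -(1 / 2) * ∑ x, h x * (σ x : ℝ)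
      - 1 / 2 * ∑ x, (τ x : ℝ) * (cavity (Function.swap J) h σ x + q x * (σ x : ℝ)) := by
  have hcoupling : ∑ x, ∑ y, J x y * (σ x : ℝ) * (τ y : ℝ)
      = ∑ y, (τ y : ℝ) * ∑ x, J x y * (σ x : ℝ) := by
    rw [Finset.sum_comm]
    simp only [Finset.mul_sum, mul_comm]
  simp only [Htilde, hcoupling, cavity, Function.swap, mul_add, Finset.sum_add_distrib,
    mul_comm (τ _ : ℝ) (h _), mul_comm (τ _ : ℝ) (q _ * _)]
  ring

/-- The logarithm of the factor by which `w(σ)` exceeds its `τ = σ` term `e^{-β H̃(σ,σ)}`. The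
couplings are transposed, so that `J` need not be symmetric: the field on `τ_y` in `H̃(σ,τ)`
involves the column `J_{·,y}`. -/
noncomputable def offDiagonalCorrection (σ : Conf V) : ℝ :=
  ∑ x, log (1 + exp (-(β * (q x + (σ x : ℝ) * cavity (Function.swap J) h σ x))))

theorem offDiagonalCorrection_sub_le {β : ℝ} (hβ : 0 ≤ β) (σ τ : Conf V) :
    offDiagonalCorrection J h q β σ - offDiagonalCorrection J h q β τ
      ≤ β * ∑ x, 2 * (|h x| + ∑ y, |J y x|)
          * exp (-(β * (q x - (|h x| + ∑ y, |J y x|)))) := by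
  rw [offDiagonalCorrection, offDiagonalCorrection, ← Finset.sum_sub_distrib, Finset.mul_sum]
  refine Finset.sum_le_sum fun x _ => ?_
  set K := |h x| + ∑ y, |J y x|
  set u : Conf V → ℝ := fun ρ => (ρ x : ℝ) * cavity (Function.swap J) h ρ x
  have hu (ρ : Conf V) : |u ρ| ≤ K := by
    rw [abs_mul, abs_spin, one_mul]
    exact abs_cavity_le (Function.swap J) h ρ x
  have hsub : |u τ - u σ| ≤ 2 * K := by linarith [abs_sub (u τ) (u σ), hu σ, hu τ]
  calc log (1 + exp (-(β * (q x + u σ)))) - log (1 + exp (-(β * (q x + u τ))))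
      ≤ exp (-(β * (q x + u σ))) * |-(β * (q x + u σ)) - -(β * (q x + u τ))| :=
        log_one_add_exp_sub_le _ _
    _ = exp (-(β * (q x + u σ))) * (β * |u τ - u σ|) := by
        rw [neg_sub_neg, ← mul_sub, add_sub_add_left_eq_sub, abs_mul, abs_of_nonneg hβ]
    _ ≤ exp (-(β * (q x - K))) * (β * (2 * K)) := by
        gcongr
        linarith [neg_le_of_abs_le (hu σ)]
    _ = β * (2 * K * exp (-(β * (q x - K)))) := by ring

variable [DecidableEq V]

theorem wSCA_eq_exp (σ : Conf V) :
    wSCA J h q β σ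
      = exp (β / 2 * ∑ x, q x - β * Hamil J h σ + offDiagonalCorrection J h q β σ) := by
  set a : V → ℝ := fun x => β / 2 * (cavity (Function.swap J) h σ x + q x * (σ x : ℝ)) with ha
  have hexponent (τ : Conf V) : -β * Htilde J h q σ τ
      = β / 2 * ∑ x, h x * (σ x : ℝ) + ∑ x, (τ x : ℝ) * a x := by
    simp only [Htilde_eq_sum_spin_mul, ha, mul_left_comm _ (β / 2), ← Finset.mul_sum]
    ring
  have hgap (x : V) :
      2 * ((σ x : ℝ) * a x) = β * (q x + (σ x : ℝ) * cavity (Function.swap J) h σ x) := by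
    linear_combination β * q x * spin_mul_self (σ x)
  calc wSCA J h q β σ
      = exp (β / 2 * ∑ x, h x * (σ x : ℝ)) * ∑ τ : Conf V, exp (∑ x, (τ x : ℝ) * a x) := by
        simp only [wSCA, hexponent, exp_add, Finset.mul_sum]
    _ = exp (-β * Htilde J h q σ σ) * ∏ x, (1 + exp (-(2 * ((σ x : ℝ) * a x)))) := by
        rw [sum_exp_sum_spin_mul a σ, ← mul_assoc, ← exp_add, ← hexponent]
    _ = exp (-β * Htilde J h q σ σ) * exp (offDiagonalCorrection J h q β σ) := by
        simp only [hgap, offDiagonalCorrection, exp_sum, exp_log (add_pos one_pos (exp_pos _))]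
    _ = exp (β / 2 * ∑ x, q x - β * Hamil J h σ + offDiagonalCorrection J h q β σ) := by
        rw [← exp_add, Htilde_self]
        ring_nf

theorem piSCA_le_piSCA_iff (σ τ : Conf V) :
    piSCA J h q β σ ≤ piSCA J h q β τ ↔ wSCA J h q β σ ≤ wSCA J h q β τ := by
  refine div_le_div_iff_of_pos_right (Finset.sum_pos (fun ρ _ => ?_) Finset.univ_nonempty)
  rw [wSCA_eq_exp]
  exact exp_pos _

end Weights

theorem piSCA_order_preserving_close_general {V : Type*} [Fintype V] [DecidableEq V]
    (J : V → V → ℝ) (h q : V → ℝ) {β : ℝ} (hβ : 0 < β) {δ : ℝ} (hδ : 0 < δ)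
    (hpin : ∀ x, |h x| + (∑ y, |J y x|)
        + (1 / β) * log (2 * (Fintype.card V : ℝ) * (|h x| + ∑ y, |J y x|) / δ) ≤ q x)
    (σ τ : Conf V) (hπ : piSCA J h q β τ ≤ piSCA J h q β σ) :
    Hamil J h σ ≤ Hamil J h τ + δ := by
  have hcorrection :
      offDiagonalCorrection J h q β σ - offDiagonalCorrection J h q β τ ≤ β * δ := by
    refine (offDiagonalCorrection_sub_le J h q hβ.le σ τ).trans ?_
    gcongr
    exact sum_le_of_forall_card_mul_le hδ.le fun x =>
      mul_two_mul_mul_exp_neg_le_of_pinning hβ hδ (by positivity) (by positivity) (hpin x)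
  rw [piSCA_le_piSCA_iff, wSCA_eq_exp, wSCA_eq_exp, exp_le_exp] at hπ
  refine le_of_mul_le_mul_left ?_ hβ
  linarith

/-- ε-closeness in the order-preserving sense: if the pinning
parameters satisfy the stated lower bound, then `π^SCA_{β,q}` is `ε`-close to
the Gibbs distribution in the order-preserving sense. -/
theorem piSCA_order_preserving_close {V : Type*} [Fintype V] [DecidableEq V] [Nonempty V]
    (J : V → V → ℝ) (hJsym : ∀ x y, J x y = J y x) (hJdiag : ∀ x, J x x = 0)
    (h q : V → ℝ) (hq : ∀ x, 0 ≤ q x) (β : ℝ) (hβ : 0 < β)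
    (ε : ℝ) (hε : ε ∈ Set.Ioo (0 : ℝ) 1) (RH : ℝ)
    (hRH : RH = Finset.univ.sup' Finset.univ_nonempty
      (fun p : Conf V × Conf V => |Hamil J h p.1 - Hamil J h p.2|))
    (hRHpos : 0 < RH)
    (hpin : ∀ x, |h x| + (∑ y, |J x y|)
        + (1 / β) * Real.log (2 * (Fintype.card V : ℝ)
            * (|h x| + ∑ y, |J x y|) / (ε * RH))
      ≤ q x) :
    ∀ σ τ : Conf V, piSCA J h q β τ ≤ piSCA J h q β σ →
      Hamil J h σ ≤ Hamil J h τ + ε * RH := by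
  intro σ τ
  refine piSCA_order_preserving_close_general J h q hβ (mul_pos hε.1 hRHpos) (fun x => ?_) σ τ
  simpa only [hJsym x] using hpin x
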